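/- arXiv:2403.07442 — 3 statements merged into one kernel-verified Lean document; each statement's English description precedes it below -/
import Mathlib

section
/- Let 𝒲, 𝒰, 𝒞, 𝒳 be measurable spaces. Let κ be a Markov kernel from 𝒰 to 𝒲 (the conditional law of the proxy W given the latent U, shared by the source and target domains). Let ν_p and ν_q be Markov kernels from 𝒞 × 𝒳 to 𝒰 (the source and target conditional laws of U given (c, x)), and let μ_p and μ_q be σ-finite measures on 𝒰 (the source and target marginal laws of U) with μ_q absolutely continuous with respect to μ_p. Let h_p, h_q : 𝒲 × 𝒞 → ℝ and g : 𝒞 × 𝒰 → ℝ be bounded measurable (g is the domain-invariant conditional mean E[Y | c, u], identical in both domains). Assume: (i) for all c ∈ 𝒞, x ∈ 𝒳: ∫_𝒰 g(c, u) dν_p((c,x))(u) = ∫_𝒰 (∫_𝒲 h_p(w, c) dκ(u)(w)) dν_p((c,x))(u), and the same identity with (ν_q, h_q) in place of (ν_p, h_p); (ii) completeness in both domains: for f ∈ {p, q}, for every c ∈ 𝒞 and every bounded measurable ℓ : 𝒰 → ℝ, if ∫_𝒰 ℓ dν_f((c,x)) = 0 for all x ∈ 𝒳, then ℓ = 0 μ_f-almost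 everywhere. Then for every c ∈ 𝒞, for μ_q-almost every u ∈ 𝒰: ∫_𝒲 h_p(w, c) dκ(u)(w) = ∫_𝒲 h_q(w, c) dκ(u)(w). -/
open MeasureTheory ProbabilityTheory

theorem bridge_aux
    {W U C X : Type*} [MeasurableSpace W] [MeasurableSpace U]
    [MeasurableSpace C] [MeasurableSpace X]
    (κ : Kernel U W) [IsMarkovKernel κ]
    (ν : Kernel (C × X) U) [IsMarkovKernel ν] (μ : Measure U)
    (h : W × C → ℝ) (g : C × U → ℝ)
    (hm : Measurable h) (hb : ∃ M, ∀ z, |h z| ≤ M)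
    (hgm : Measurable g) (hgb : ∃ M, ∀ z, |g z| ≤ M)
    (hbr : ∀ c x, ∫ u, g (c, u) ∂(ν (c, x)) =
      ∫ u, (∫ w, h (w, c) ∂(κ u)) ∂(ν (c, x)))
    (hc : ∀ (c : C) (ℓ : U → ℝ), Measurable ℓ →
      (∃ M, ∀ u, |ℓ u| ≤ M) →
      (∀ x, ∫ u, ℓ u ∂(ν (c, x)) = 0) → ℓ =ᵐ[μ] 0) (c : C) :
    ∀ᵐ u ∂μ, g (c, u) = ∫ w, h (w, c) ∂(κ u) := by
  obtain ⟨M, hM⟩ := hb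
  obtain ⟨N, hN⟩ := hgb
  have m1 : Measurable fun u => g (c, u) := hgm.comp measurable_prodMk_left
  have m0 : Measurable fun w => h (w, c) := hm.comp measurable_prodMk_right
  have m2 : Measurable fun u => ∫ w, h (w, c) ∂(κ u) :=
    (m0.stronglyMeasurable.integral_kernel (κ := κ)).measurable
  have b2 : ∀ u, |∫ w, h (w, c) ∂(κ u)| ≤ M := fun u => by
    have := norm_integral_le_of_norm_le_const (μ := κ u) (f := fun w => h (w, c)) (C := M)
      (Filter.Eventually.of_forall fun w => hM (w, c))
    simpa using this
  have key := hc c (fun u => g (c, u) - ∫ w, h (w, c) ∂(κ u)) (m1.sub m2)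
    ⟨N + M, fun u => (abs_sub _ _).trans (add_le_add (hN _) (b2 u))⟩ (fun x => by
      rw [integral_sub, hbr, sub_self]
      · exact Integrable.of_bound m1.aestronglyMeasurable N
          (Filter.Eventually.of_forall fun u => hN (c, u))
      · exact Integrable.of_bound m2.aestronglyMeasurable M
          (Filter.Eventually.of_forall b2))
  filter_upwards [key] with u hu
  exact sub_eq_zero.mp hu

/-- Part 1 of the main identification theorem (concept shift): under shared
proxy kernel `κ = P(W|U) = Q(W|U)`, domain-invariant conditional mean `g`,
the bridge equations in both domains, completeness in both domains, and the
support condition `μ_q ≪ μ_p`, the source and target bridge functions have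
`μ_q`-a.e. equal integrals against `κ`. -/
theorem bridge_functions_agree
    {W U C X : Type*} [MeasurableSpace W] [MeasurableSpace U]
    [MeasurableSpace C] [MeasurableSpace X]
    (κ : Kernel U W) [IsMarkovKernel κ]
    (νp νq : Kernel (C × X) U) [IsMarkovKernel νp] [IsMarkovKernel νq]
    (μp μq : Measure U) [SigmaFinite μp] [SigmaFinite μq]
    (hac : μq ≪ μp)
    (hp hq : W × C → ℝ) (g : C × U → ℝ)
    (hpm : Measurable hp) (hpb : ∃ M, ∀ z, |hp z| ≤ M)
    (hqm : Measurable hq) (hqb : ∃ M, ∀ z, |hq z| ≤ M)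
    (hgm : Measurable g) (hgb : ∃ M, ∀ z, |g z| ≤ M)
    (hbridge_p : ∀ c x, ∫ u, g (c, u) ∂(νp (c, x)) =
      ∫ u, (∫ w, hp (w, c) ∂(κ u)) ∂(νp (c, x)))
    (hbridge_q : ∀ c x, ∫ u, g (c, u) ∂(νq (c, x)) =
      ∫ u, (∫ w, hq (w, c) ∂(κ u)) ∂(νq (c, x)))
    (hcomplete_p : ∀ (c : C) (ℓ : U → ℝ), Measurable ℓ →
      (∃ M, ∀ u, |ℓ u| ≤ M) →
      (∀ x, ∫ u, ℓ u ∂(νp (c, x)) = 0) → ℓ =ᵐ[μp] 0)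
    (hcomplete_q : ∀ (c : C) (ℓ : U → ℝ), Measurable ℓ →
      (∃ M, ∀ u, |ℓ u| ≤ M) →
      (∀ x, ∫ u, ℓ u ∂(νq (c, x)) = 0) → ℓ =ᵐ[μq] 0) :
    ∀ c : C, ∀ᵐ u ∂μq,
      (∫ w, hp (w, c) ∂(κ u)) = ∫ w, hq (w, c) ∂(κ u) := by
  intro c
  filter_upwards [hac.ae_le (bridge_aux κ νp μp hp g hpm hpb hgm hgb hbridge_p hcomplete_p c),
    bridge_aux κ νq μq hq g hqm hqb hgm hgb hbridge_q hcomplete_q c] with u h1 h2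
  exact h1.symm.trans h2
end

section
/- Let 𝒲, 𝒰, 𝒞, 𝒳 be measurable spaces, κ a Markov kernel from 𝒰 to 𝒲, ν_p and ν_q Markov kernels from 𝒞 × 𝒳 to 𝒰, μ_p and μ_q σ-finite measures on 𝒰 with μ_q ≪ μ_p, ρ a Markov kernel from 𝒳 to 𝒞 (the target conditional law Q(C | x)), and h_p, h_q : 𝒲 × 𝒞 → ℝ, g : 𝒞 × 𝒰 → ℝ bounded measurable. Assume: (i) for all c, x: ∫_𝒰 g(c,u) dν_p((c,x)) = ∫_𝒰 (∫_𝒲 h_p(w,c) dκ(u)) dν_p((c,x)), and the same with (ν_q, h_q); (ii) for f ∈ {p, q}, for every c and every bounded measurable ℓ : 𝒰 → ℝ, (∀x, ∫_𝒰 ℓ dν_f((c,x)) = 0) implies ℓ = 0 μ_f-a.e.; (iii) for all c, x, the measure ν_q((c,x)) is absolutely continuous with respect to μ_q. Then for every x ∈ 𝒳: ∫_𝒞 [∫_𝒰 (∫_𝒲 h_q(w,c) dκ(u)(w)) dν_q((c,x))(u)] dρ(x)(c) = ∫_𝒞 [∫_𝒰 (∫_𝒲 h_p(w,c) dκ(u)(w))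 dν_q((c,x))(u)] dρ(x)(c). In particular, the target-domain mean E_q[Y | x] equals the integral of the source bridge function h_p against the target distribution of (W, C) given x. -/
open MeasureTheory ProbabilityTheory

/-- Part 2 of the main identification theorem: the source bridge function
`h_p` transfers to the target domain, identifying `E_q[Y | x]` from target
observables, i.e. the target-domain mean computed with the target bridge
function `h_q` equals the one computed with the source bridge function
`h_p`. -/
theorem source_bridge_transfers
    {W U C X : Type*} [MeasurableSpace W] [MeasurableSpace U]
    [MeasurableSpace C] [MeasurableSpace X]
    (κ : Kernel U W) [IsMarkovKernel κ]
    (νp νq : Kernel (C × X) U) [IsMarkovKernel νp] [IsMarkovKernel νq]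
    (μp μq : Measure U) [SigmaFinite μp] [SigmaFinite μq]
    (hac : μq ≪ μp)
    (ρ : Kernel X C) [IsMarkovKernel ρ]
    (hp hq : W × C → ℝ) (g : C × U → ℝ)
    (hpm : Measurable hp) (hpb : ∃ M, ∀ z, |hp z| ≤ M)
    (hqm : Measurable hq) (hqb : ∃ M, ∀ z, |hq z| ≤ M)
    (hgm : Measurable g) (hgb : ∃ M, ∀ z, |g z| ≤ M)
    (hbridge_p : ∀ c x, ∫ u, g (c, u) ∂(νp (c, x)) =
      ∫ u, (∫ w, hp (w, c) ∂(κ u)) ∂(νp (c, x)))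
    (hbridge_q : ∀ c x, ∫ u, g (c, u) ∂(νq (c, x)) =
      ∫ u, (∫ w, hq (w, c) ∂(κ u)) ∂(νq (c, x)))
    (hcomplete_p : ∀ (c : C) (ℓ : U → ℝ), Measurable ℓ →
      (∃ M, ∀ u, |ℓ u| ≤ M) →
      (∀ x, ∫ u, ℓ u ∂(νp (c, x)) = 0) → ℓ =ᵐ[μp] 0)
    (hcomplete_q : ∀ (c : C) (ℓ : U → ℝ), Measurable ℓ →
      (∃ M, ∀ u, |ℓ u| ≤ M) →
      (∀ x, ∫ u, ℓ u ∂(νq (c, x)) = 0) → ℓ =ᵐ[μq] 0)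
    (hsupp : ∀ c x, νq (c, x) ≪ μq) :
    ∀ x : X,
      (∫ c, (∫ u, (∫ w, hq (w, c) ∂(κ u)) ∂(νq (c, x))) ∂(ρ x)) =
      ∫ c, (∫ u, (∫ w, hp (w, c) ∂(κ u)) ∂(νq (c, x))) ∂(ρ x) := by
  intro x
  congr 1
  funext c
  rw [← hbridge_q c x]
  obtain ⟨M, hM⟩ := hpb
  obtain ⟨N, hN⟩ := hgb
  have hm : Measurable (fun u => ∫ w, hp (w, c) ∂(κ u)) := by
    have h1 : StronglyMeasurable (fun w => hp (w, c)) :=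
      (hpm.comp (measurable_id.prodMk measurable_const)).stronglyMeasurable
    exact (StronglyMeasurable.integral_kernel h1).measurable
  have hgc : Measurable (fun u => g (c, u)) := hgm.comp (measurable_const.prodMk measurable_id)
  have hb : ∀ u, |∫ w, hp (w, c) ∂(κ u)| ≤ M := by
    intro u
    have h := norm_integral_le_of_norm_le_const (μ := κ u) (f := fun w => hp (w, c)) (C := M)
      (Filter.Eventually.of_forall fun w => hM (w, c))
    simpa using h
  have h0 := hcomplete_p c (fun u => g (c, u) - ∫ w, hp (w, c) ∂(κ u)) (hgc.sub hm)
    ⟨N + M, fun u => (abs_sub _ _).trans (add_le_add (hN _) (hb u))⟩ (by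
      intro x'
      rw [integral_sub, hbridge_p c x', sub_self]
      · exact Integrable.of_bound hgc.aestronglyMeasurable N
          (Filter.Eventually.of_forall fun u => hN _)
      · exact Integrable.of_bound hm.aestronglyMeasurable M
          (Filter.Eventually.of_forall fun u => hb u))
  have h1 := (hsupp c x).ae_le (hac.ae_le h0)
  apply integral_congr_ae
  filter_upwards [h1] with u hu
  exact sub_eq_zero.mp hu
end

section
/- Let 𝒲, 𝒰, 𝒳 be measurable spaces, κ a Markov kernel from 𝒰 to 𝒲 (the domain-invariant conditional law of W given U), k a positive integer, and for each r ∈ {1, …, k} let ν_r be a Markov kernel from 𝒳 to 𝒰 (the law P(U | x, z_r) in source domain r); let μ be a σ-finite measure on 𝒰 (the source marginal P(U)). Let m₀ : 𝒲 × 𝒳 → ℝ and g : 𝒳 × 𝒰 → ℝ be bounded measurable (g is the domain-invariant conditional mean E[Y | x, u]). Assume: (i) for every r and every x: ∫_𝒰 g(x,u) dν_r(x)(u) = ∫_𝒰 (∫_𝒲 m₀(w,x) dκ(u)(w)) dν_r(x)(u); (ii) completeness: for every x and every bounded measurable ℓ : 𝒰 → ℝ, if ∫_𝒰 ℓ dν_r(x)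 = 0 for all r ∈ {1, …, k}, then ℓ = 0 μ-a.e.; (iii) ν_q is a Markov kernel from 𝒳 to 𝒰 (the target law Q(U | x)) with ν_q(x) absolutely continuous with respect to μ for every x. Then for every x ∈ 𝒳: ∫_𝒰 g(x,u) dν_q(x)(u) = ∫_𝒰 (∫_𝒲 m₀(w,x) dκ(u)(w)) dν_q(x)(u); that is, E_q[Y | x] = E_q[m₀(W, x) | x]. -/
open MeasureTheory ProbabilityTheory

/-- Multi-domain transfer with continuous variables: a bridge function `m₀`
satisfying the bridge equation in each of the `k` source domains transfers
to any target domain whose latent law is supported on the source marginal,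
so that `E_q[Y | x] = E_q[m₀(W, x) | x]`. -/
theorem multidomain_transfer
    {W U X : Type*} [MeasurableSpace W] [MeasurableSpace U] [MeasurableSpace X]
    (κ : Kernel U W) [IsMarkovKernel κ]
    (k : ℕ) (hk : 0 < k)
    (ν : Fin k → Kernel X U) (hν : ∀ r, IsMarkovKernel (ν r))
    (μ : Measure U) [SigmaFinite μ]
    (m₀ : W × X → ℝ) (g : X × U → ℝ)
    (hm₀m : Measurable m₀) (hm₀b : ∃ M, ∀ z, |m₀ z| ≤ M)
    (hgm : Measurable g) (hgb : ∃ M, ∀ z, |g z| ≤ M)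
    (hbridge : ∀ (r : Fin k) (x : X), ∫ u, g (x, u) ∂(ν r x) =
      ∫ u, (∫ w, m₀ (w, x) ∂(κ u)) ∂(ν r x))
    (hcomplete : ∀ (x : X) (ℓ : U → ℝ), Measurable ℓ →
      (∃ M, ∀ u, |ℓ u| ≤ M) →
      (∀ r : Fin k, ∫ u, ℓ u ∂(ν r x) = 0) → ℓ =ᵐ[μ] 0)
    (νq : Kernel X U) [IsMarkovKernel νq]
    (hsupp : ∀ x, νq x ≪ μ) :
    ∀ x : X, ∫ u, g (x, u) ∂(νq x) =
      ∫ u, (∫ w, m₀ (w, x) ∂(κ u)) ∂(νq x) := by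
  intro x
  obtain ⟨M, hM⟩ := hm₀b
  obtain ⟨G, hG⟩ := hgb
  have hgx : Measurable (fun u => g (x, u)) := hgm.comp measurable_prodMk_left
  have hmx : Measurable (fun w => m₀ (w, x)) := hm₀m.comp measurable_prodMk_right
  have hh : Measurable (fun u => ∫ w, m₀ (w, x) ∂(κ u)) :=
    (hmx.stronglyMeasurable.integral_kernel (κ := κ)).measurable
  have hhb : ∀ u, |∫ w, m₀ (w, x) ∂(κ u)| ≤ M := by
    intro u
    have h := norm_integral_le_of_norm_le_const (μ := κ u) (f := fun w => m₀ (w, x)) (C := M)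
      (Filter.Eventually.of_forall fun w => hM (w, x))
    simpa using h
  have hz : (fun u => g (x, u) - ∫ w, m₀ (w, x) ∂(κ u)) =ᵐ[μ] 0 := by
    refine hcomplete x _ (hgx.sub hh) ⟨G + M, fun u => ?_⟩ fun r => ?_
    · exact (abs_sub _ _).trans (add_le_add (hG _) (hhb u))
    · have := hν r
      rw [integral_sub, hbridge r x, sub_self]
      · exact Integrable.of_bound hgx.aestronglyMeasurable G
          (Filter.Eventually.of_forall fun u => hG (x, u))
      · exact Integrable.of_bound hh.aestronglyMeasurable M
          (Filter.Eventually.of_forall hhb)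
  refine integral_congr_ae ?_
  filter_upwards [(hsupp x).ae_le hz] with u hu
  exact sub_eq_zero.mp hu
end
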